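/- arXiv:1901.08320 — 2 statements merged into one kernel-verified Lean document; each statement's English description precedes it below -/
import Mathlib

section
/- For r ≥ 1, the real Waring rank of F = x^r y^r (x + y) is 2r + 1, while its complex Waring rank is r + 1; hence the gap between the real and the complex Waring rank can be arbitrarily large. -/
open MvPolynomial

noncomputable def lin (c : ℂ × ℂ) : MvPolynomial (Fin 2) ℂ :=
  C c.1 * X 0 + C c.2 * X 1

noncomputable def waringRank (d : ℕ) (F : MvPolynomial (Fin 2) ℂ) : ℕ :=
  sInf {r | ∃ (a : Fin r → ℂ) (c : Fin r → ℂ × ℂ), F = ∑ i, C (a i) * lin (c i) ^ d}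

noncomputable def rlin (c : ℝ × ℝ) : MvPolynomial (Fin 2) ℝ :=
  C c.1 * X 0 + C c.2 * X 1

noncomputable def realWaringRank (d : ℕ) (F : MvPolynomial (Fin 2) ℝ) : ℕ :=
  sInf {r | ∃ (a : Fin r → ℝ) (c : Fin r → ℝ × ℝ), F = ∑ i, C (a i) * rlin (c i) ^ d}

/-! Let `L` be the functional with `L(Zⁱ) = wᵢ`, where `F = ∑ (d choose i) wᵢ xⁱ yᵈ⁻ⁱ`. Writing `F`
as a combination of `n` powers `(uⱼ x + vⱼ y)ᵈ` amounts to writing `L`, on polynomials of degree at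
most `d`, as a combination of evaluations at the points `(uⱼ : vⱼ)`; by Lagrange interpolation this
is possible with the simple roots of `P` as points once `L` kills all multiples of `P` (Sylvester).

For `F = xʳ yʳ (x + y)` and `d = 2r + 1`, `L f` is, up to a scalar, the coefficient of `Zʳ⁺¹` in
`(Z + 1) f`. Over an algebraically closed field, `P = (Z ^ (r + 2) ± 1) / (Z + 1)` gives `r + 1`
points, and with `r` points `L` would kill a monic polynomial of degree `r`, on which it is nonzero.
Over `ℝ`, a decomposition with `2r` terms would give `P` with simple real roots and
`pᵣ₋₁ = -pᵣ = pᵣ₊₁`, against Newton's inequality; and the antipalindromic polynomial with roots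
`2ᵏ`, `-r ≤ k ≤ r`, gives `2r + 1` points. -/

open scoped Polynomial Nat
open Finset Lagrange

section Sylvester

variable {K : Type*} [Field K]

/-- `F` is a linear combination of `n` many `d`-th powers of linear forms over `K`; the Waring ranks
`waringRank` and `realWaringRank` are the least such `n` over `ℂ` and `ℝ`. -/
def HasWaringDecomposition (d n : ℕ) (F : MvPolynomial (Fin 2) K) : Prop :=
  ∃ (a : Fin n → K) (c : Fin n → K × K), F = ∑ j, C (a j) * (C (c j).1 * X 0 + C (c j).2 * X 1) ^ d

/-- The dehomogenization `∑ (d choose i) L(Zⁱ) Zⁱ` of `momentForm d L`. -/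
noncomputable def momentPolynomial (d : ℕ) (L : K[X] →ₗ[K] K) : K[X] :=
  ∑ i ∈ range (d + 1), Polynomial.monomial i (d.choose i * L (Polynomial.X ^ i))

/-- The binary form `∑ (d choose i) L(Zⁱ) xⁱ yᵈ⁻ⁱ` with moment functional `L`. In characteristic
zero every binary form of degree `d` arises this way, and `L` is its apolar pairing with
dehomogenized forms of degree `d`. -/
noncomputable def momentForm (d : ℕ) (L : K[X] →ₗ[K] K) : MvPolynomial (Fin 2) K :=
  (momentPolynomial d L).homogenize d

/-- Evaluation of the degree-`d` homogenization of a polynomial at a point `c`: the moment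
functional of the `d`-th power of the linear form with coefficients `c`. -/
noncomputable def homogenizedEval (d : ℕ) (c : K × K) : K[X] →ₗ[K] K :=
  (MvPolynomial.aeval ![c.1, c.2]).toLinearMap ∘ₗ Polynomial.homogenizeLM d

lemma homogenizedEval_apply (d : ℕ) (c : K × K) (f : K[X]) :
    homogenizedEval d c f = MvPolynomial.eval ![c.1, c.2] (f.homogenize d) := by
  simp [homogenizedEval, MvPolynomial.aeval_eq_eval]

lemma homogenizedEval_X_pow {d i : ℕ} (hi : i ≤ d) (c : K × K) :
    homogenizedEval d c (Polynomial.X ^ i) = c.1 ^ i * c.2 ^ (d - i) := by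
  simp [homogenizedEval_apply, hi]

lemma homogenizedEval_of_snd_ne_zero {d : ℕ} {c : K × K} {f : K[X]} (hf : f.natDegree ≤ d)
    (hc : c.2 ≠ 0) : homogenizedEval d c f = f.eval (c.1 / c.2) * c.2 ^ d := by
  rw [homogenizedEval_apply, Polynomial.eval_homogenize hf _ hc]
  rfl

lemma homogenizedEval_mk_one {d : ℕ} {f : K[X]} (hf : f.natDegree ≤ d) (t : K) :
    homogenizedEval d (t, 1) f = f.eval t := by
  rw [homogenizedEval_of_snd_ne_zero hf one_ne_zero, div_one, one_pow, mul_one]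

lemma homogenizedEval_of_natDegree_lt {d : ℕ} {c : K × K} {f : K[X]} (hf : f.natDegree < d)
    (hc : c.2 = 0) : homogenizedEval d c f = 0 := by
  rw [f.as_sum_range' d hf, map_sum]
  refine sum_eq_zero fun i hi ↦ ?_
  have hid : i < d := mem_range.1 hi
  rw [← Polynomial.C_mul_X_pow_eq_monomial, ← Polynomial.smul_eq_C_mul, map_smul,
    homogenizedEval_X_pow hid.le, hc, zero_pow (by lia), mul_zero, smul_zero]

lemma coeff_momentPolynomial (d : ℕ) (L : K[X] →ₗ[K] K) (i : ℕ) :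
    (momentPolynomial d L).coeff i = d.choose i * L (Polynomial.X ^ i) := by
  simp only [momentPolynomial, Polynomial.finsetSum_coeff, Polynomial.coeff_monomial, sum_ite_eq',
    mem_range, Nat.lt_succ_iff, ite_eq_left_iff, not_le]
  intro hi
  simp [Nat.choose_eq_zero_of_lt hi]

lemma natDegree_momentPolynomial_le (d : ℕ) (L : K[X] →ₗ[K] K) :
    (momentPolynomial d L).natDegree ≤ d :=
  Polynomial.natDegree_sum_le_of_forall_le _ _ fun _ hi ↦
    (Polynomial.natDegree_monomial_le _).trans (mem_range_succ_iff.1 hi)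

lemma momentPolynomial_homogenizedEval (d : ℕ) (c : K × K) :
    momentPolynomial d (homogenizedEval d c) =
      (Polynomial.C c.1 * Polynomial.X + Polynomial.C c.2) ^ d := by
  rw [momentPolynomial, add_pow]
  refine sum_congr rfl fun i hi ↦ ?_
  rw [homogenizedEval_X_pow (mem_range_succ_iff.1 hi), ← Polynomial.C_mul_X_pow_eq_monomial]
  simp only [map_mul, map_pow, map_natCast]
  ring

lemma momentForm_homogenizedEval (d : ℕ) (c : K × K) :
    momentForm d (homogenizedEval d c) = (C c.1 * X 0 + C c.2 * X 1) ^ d := by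
  have hlin : (C c.1 * X 0 + C c.2 * X 1 : MvPolynomial (Fin 2) K).IsHomogeneous 1 :=
    (isHomogeneous_C_mul_X _ _).add (isHomogeneous_C_mul_X _ _)
  refine Polynomial.homogenize_eq_of_isHomogeneous (by simpa using hlin.pow d) ?_
  simp [momentPolynomial_homogenizedEval]

lemma momentForm_sum_smul {ι : Type*} (s : Finset ι) (d : ℕ) (a : ι → K) (L : ι → K[X] →ₗ[K] K) :
    momentForm d (∑ j ∈ s, a j • L j) = ∑ j ∈ s, C (a j) * momentForm d (L j) := by
  simp only [momentForm, ← Polynomial.homogenize_C_mul, ← Polynomial.homogenize_finsetSum]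
  congr 1
  ext i
  simp only [coeff_momentPolynomial, Polynomial.finsetSum_coeff, Polynomial.coeff_C_mul,
    LinearMap.sum_apply, LinearMap.smul_apply, smul_eq_mul, mul_sum, mul_left_comm]

lemma eq_sum_basis_of_annihilates_nodal {ι : Type*} [DecidableEq ι] {s : Finset ι}
    {v : ι → K} {d : ℕ} {L : K[X] →ₗ[K] K} (hv : Set.InjOn v s)
    (hL : ∀ g : K[X], g.natDegree + #s ≤ d → L (nodal s v * g) = 0) {f : K[X]}
    (hf : f.natDegree ≤ d) : L f = ∑ i ∈ s, L (Lagrange.basis s v i) * f.eval (v i) := by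
  have hmonic : (nodal s v).Monic := nodal_monic
  have hquot : L (nodal s v * (f /ₘ nodal s v)) = 0 := by
    rcases lt_or_ge f.natDegree #s with hlt | hle
    · rw [(Polynomial.divByMonic_eq_zero_iff hmonic).2
        (Polynomial.degree_lt_degree (by rwa [natDegree_nodal])), mul_zero, map_zero]
    · exact hL _ (by rw [Polynomial.natDegree_divByMonic _ hmonic, natDegree_nodal]; lia)
  have hrem : f %ₘ nodal s v = interpolate s v fun i ↦ f.eval (v i) := by
    refine eq_interpolate_of_eval_eq _ hv ?_ fun i hi ↦
      Polynomial.eval₂_modByMonic_eq_self_of_root (eval_nodal_at_node hi)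
    simpa using Polynomial.degree_modByMonic_lt f hmonic
  calc L f = L (f %ₘ nodal s v) := by
        conv_lhs => rw [← Polynomial.modByMonic_add_div f (nodal s v), map_add, hquot, add_zero]
    _ = ∑ i ∈ s, L (Lagrange.basis s v i) * f.eval (v i) := by
        rw [hrem, interpolate_apply, map_sum]
        refine sum_congr rfl fun i _ ↦ ?_
        rw [← Polynomial.smul_eq_C_mul, map_smul, smul_eq_mul, mul_comm]

variable [CharZero K]

lemma momentForm_eq_iff {d : ℕ} {L L' : K[X] →ₗ[K] K} :
    momentForm d L = momentForm d L' ↔ ∀ f : K[X], f.natDegree ≤ d → L f = L' f := by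
  constructor
  · intro h f hf
    have hpoly : momentPolynomial d L = momentPolynomial d L' := by
      simpa [momentForm, natDegree_momentPolynomial_le] using
        congrArg (MvPolynomial.aeval ![(Polynomial.X : K[X]), 1]) h
    have hmoment : ∀ i ≤ d, L (Polynomial.X ^ i) = L' (Polynomial.X ^ i) := by
      intro i hi
      have hchoose : (d.choose i : K) ≠ 0 := mod_cast (Nat.choose_pos hi).ne'
      have hcoeff := congrArg (Polynomial.coeff · i) hpoly
      simpa only [coeff_momentPolynomial, mul_right_inj' hchoose] using hcoeff
    rw [f.as_sum_range_C_mul_X_pow' (Nat.lt_succ_of_le hf)]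
    simp only [map_sum, ← Polynomial.smul_eq_C_mul, map_smul]
    exact sum_congr rfl fun i hi ↦ by rw [hmoment i (mem_range_succ_iff.1 hi)]
  · intro h
    rw [momentForm, momentForm, momentPolynomial, momentPolynomial]
    congr 1
    refine sum_congr rfl fun i hi ↦ ?_
    rw [h _ ((Polynomial.natDegree_X_pow_le i).trans (mem_range_succ_iff.1 hi))]

lemma hasWaringDecomposition_momentForm_iff {d n : ℕ} {L : K[X] →ₗ[K] K} :
    HasWaringDecomposition d n (momentForm d L) ↔ ∃ (a : Fin n → K) (c : Fin n → K × K),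
      ∀ f : K[X], f.natDegree ≤ d → L f = ∑ j, a j * homogenizedEval d (c j) f := by
  simp only [HasWaringDecomposition, ← momentForm_homogenizedEval, ← momentForm_sum_smul,
    momentForm_eq_iff]
  simp

/-- If one of the linear forms is a multiple of `x`, it is a root at infinity and lowers the degree
of the annihilating polynomial by one. -/
theorem HasWaringDecomposition.exists_annihilating_nodal {d n k : ℕ} {L : K[X] →ₗ[K] K}
    (h : HasWaringDecomposition d n (momentForm d L)) (hnk : n ≤ k) :
    ∃ T : Finset K, #T ≤ k ∧ k ≤ #T + 1 ∧
      ∀ g : K[X], g.natDegree + k ≤ d → L (nodal T id * g) = 0 := by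
  classical
  obtain ⟨a, c, hL⟩ := hasWaringDecomposition_momentForm_iff.1 h
  set affine := univ.filter fun j ↦ (c j).2 ≠ 0
  set Z : Finset K := affine.image fun j ↦ (c j).1 / (c j).2
  have hZ : #Z ≤ #affine := card_image_le
  have haffine : #affine ≤ n := by simpa using card_le_univ affine
  obtain ⟨D, hZD, hDk, hkD, hinf⟩ : ∃ D, #Z ≤ D ∧ D ≤ k ∧ k ≤ D + 1 ∧
      ∀ j, (c j).2 = 0 → D < k := by
    by_cases hex : ∃ j, (c j).2 = 0
    · obtain ⟨j, hj⟩ := hex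
      have hlt : #affine < n := by
        simpa using card_lt_univ_of_notMem (s := affine) (x := j) (by simp [affine, hj])
      exact ⟨k - 1, by lia, by lia, by lia, fun _ _ ↦ by lia⟩
    · exact ⟨k, by lia, le_rfl, by lia, fun j hj ↦ absurd ⟨j, hj⟩ hex⟩
  obtain ⟨T, hZT, rfl⟩ := Infinite.exists_superset_card_eq Z D hZD
  refine ⟨T, hDk, hkD, fun g hg ↦ ?_⟩
  have hdeg : (nodal T id * g).natDegree ≤ #T + g.natDegree :=
    Polynomial.natDegree_mul_le.trans (by rw [natDegree_nodal])
  rw [hL _ (by lia)]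
  refine sum_eq_zero fun j _ ↦ mul_eq_zero_of_right _ ?_
  by_cases hj : (c j).2 = 0
  · exact homogenizedEval_of_natDegree_lt (by have := hinf j hj; lia) hj
  · have hmem : (c j).1 / (c j).2 ∈ T := hZT (mem_image_of_mem _ (by simp [affine, hj]))
    have hroot := eval_nodal_at_node (v := id) hmem
    rw [id] at hroot
    rw [homogenizedEval_of_snd_ne_zero (by lia) hj, Polynomial.eval_mul, hroot, zero_mul, zero_mul]

theorem hasWaringDecomposition_of_annihilates_nodal {ι : Type*} {s : Finset ι} {v : ι → K} {d : ℕ}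
    {L : K[X] →ₗ[K] K} (hv : Set.InjOn v s)
    (hL : ∀ g : K[X], g.natDegree + #s ≤ d → L (nodal s v * g) = 0) :
    HasWaringDecomposition d #s (momentForm d L) := by
  classical
  refine hasWaringDecomposition_momentForm_iff.2
    ⟨fun j ↦ L (Lagrange.basis s v (s.equivFin.symm j)), fun j ↦ (v (s.equivFin.symm j), 1),
      fun f hf ↦ ?_⟩
  simp only [homogenizedEval_mk_one hf]
  rw [eq_sum_basis_of_annihilates_nodal hv hL hf, ← sum_coe_sort]
  exact (s.equivFin.symm.sum_comp
    fun i : s ↦ L (Lagrange.basis s v i) * f.eval (v i)).symm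

end Sylvester

section RootSets

lemma C_leadingCoeff_mul_nodal_roots {R : Type*} [CommRing R] [IsDomain R] [DecidableEq R]
    {p : R[X]} (hp : p.Splits) (hnodup : p.roots.Nodup) :
    Polynomial.C p.leadingCoeff * nodal p.roots.toFinset id = p := by
  conv_rhs => rw [hp.eq_prod_roots]
  rw [nodal_eq, prod_eq_multiset_prod, Multiset.toFinset_val, hnodup.dedup]
  rfl

/-- Rolle's theorem supplies as many roots of the derivative as its degree allows. -/
lemma exists_derivative_nodal_eq {T : Finset ℝ} (hT : T.Nonempty) :
    ∃ T' : Finset ℝ, #T' + 1 = #T ∧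
      Polynomial.derivative (nodal T id) = Polynomial.C (#T : ℝ) * nodal T' id := by
  set p := Polynomial.derivative (nodal T id)
  have hcard : 0 < #T := hT.card_pos
  have hdeg : p.natDegree = #T - 1 := by rw [Polynomial.natDegree_derivative, natDegree_nodal]
  have hrolle : #T ≤ #p.roots.toFinset + 1 := by
    have hroots : (nodal T id).roots.toFinset = T := by
      rw [nodal_eq]
      simp only [id, Polynomial.roots_prod_X_sub_C, val_toFinset]
    simpa only [hroots] using Polynomial.card_roots_toFinset_le_derivative (nodal T id)
  have hle : #p.roots.toFinset ≤ p.roots.card := Multiset.toFinset_card_le _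
  have hle' : p.roots.card ≤ p.natDegree := p.card_roots'
  have hsplits : p.Splits := Polynomial.splits_iff_card_roots.2 (by lia)
  have hnodup : p.roots.Nodup := Multiset.toFinset_card_eq_card_iff_nodup.1 (by lia)
  have hlead : p.leadingCoeff = #T := by
    rw [Polynomial.leadingCoeff, hdeg, Polynomial.coeff_derivative, Nat.sub_add_cancel hcard,
      ← natDegree_nodal (s := T) (v := (id : ℝ → ℝ)), nodal_monic.coeff_natDegree, natDegree_nodal]
    push_cast [hcard]
    ring
  exact ⟨p.roots.toFinset, by lia, by rw [← hlead, C_leadingCoeff_mul_nodal_roots hsplits hnodup]⟩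

lemma exists_iterate_derivative_nodal_eq {T : Finset ℝ} {k : ℕ} (hk : k ≤ #T) :
    ∃ c ≠ 0, ∃ T' : Finset ℝ, #T' + k = #T ∧
      Polynomial.derivative^[k] (nodal T id) = Polynomial.C c * nodal T' id := by
  induction k with
  | zero => exact ⟨1, one_ne_zero, T, by simp, by simp⟩
  | succ k ih =>
    obtain ⟨c, hc, S, hS, hder⟩ := ih (by lia)
    have hSpos : 0 < #S := by lia
    obtain ⟨T', hT', hderS⟩ := exists_derivative_nodal_eq (card_pos.1 hSpos)
    refine ⟨c * #S, mul_ne_zero hc (mod_cast hSpos.ne'), T', by lia, ?_⟩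
    rw [Function.iterate_succ_apply', hder, Polynomial.derivative_C_mul, hderS, ← mul_assoc,
      ← Polynomial.C_mul]

/-- Laguerre's inequality, by adding one root at a time. -/
lemma eval_mul_eval_derivative_derivative_nodal_lt {F : Type*} [Field F] [LinearOrder F]
    [IsStrictOrderedRing F] {T : Finset F} (hT : T.Nonempty) (x : F) :
    (nodal T id).eval x * (Polynomial.derivative (Polynomial.derivative (nodal T id))).eval x <
      (Polynomial.derivative (nodal T id)).eval x ^ 2 := by
  induction hT using Finset.Nonempty.cons_induction with
  | singleton b => simp [nodal_eq]
  | cons b T hb _ ih =>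
    set q := nodal T id with hq
    set q' := Polynomial.derivative q
    set q'' := Polynomial.derivative q'
    have hexpand : nodal (cons b T hb) id = (Polynomial.X - Polynomial.C b) * q := by
      rw [hq, nodal_eq, nodal_eq, prod_cons, id]
    have hdefect :
        (Polynomial.derivative (nodal (cons b T hb) id)).eval x ^ 2 -
          (nodal (cons b T hb) id).eval x *
            (Polynomial.derivative (Polynomial.derivative (nodal (cons b T hb) id))).eval x =
        q.eval x ^ 2 + (x - b) ^ 2 * (q'.eval x ^ 2 - q.eval x * q''.eval x) := by
      rw [hexpand]
      simp only [Polynomial.derivative_mul, Polynomial.derivative_add, Polynomial.derivative_sub,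
        Polynomial.derivative_X, Polynomial.derivative_C, sub_zero, one_mul, Polynomial.eval_add,
        Polynomial.eval_mul, Polynomial.eval_sub, Polynomial.eval_X, Polynomial.eval_C, q', q'']
      ring
    have hih : 0 < q'.eval x ^ 2 - q.eval x * q''.eval x := sub_pos.2 ih
    rw [← sub_pos, hdefect]
    rcases eq_or_ne x b with rfl | hx
    · have hqx : q.eval x ≠ 0 := eval_nodal_not_at_node fun i hi h ↦ hb (by rwa [h])
      positivity
    · exact add_pos_of_nonneg_of_pos (sq_nonneg _)
        (mul_pos (sq_pos_of_ne_zero (sub_ne_zero.2 hx)) hih)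

/-- Newton's inequality: this is Laguerre's inequality at `0` for the `k`-th derivative. -/
theorem coeff_mul_coeff_add_two_nodal_lt {T : Finset ℝ} {k : ℕ} (hk : k + 1 ≤ #T) :
    (k + 2) * ((nodal T id).coeff k * (nodal T id).coeff (k + 2)) <
      (k + 1) * (nodal T id).coeff (k + 1) ^ 2 := by
  set p := nodal T id
  obtain ⟨c, hc, T', hT', hder⟩ := exists_iterate_derivative_nodal_eq (T := T) (k := k) (by lia)
  set q := nodal T' id
  have hcoeff (j : ℕ) : c * (Polynomial.derivative^[j] q).eval 0 = (j + k)! * p.coeff (j + k) := by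
    rw [← Polynomial.coeff_zero_eq_eval_zero, ← Polynomial.coeff_C_mul,
      ← Polynomial.iterate_derivative_C_mul, ← hder, ← Function.iterate_add_apply,
      Polynomial.coeff_iterate_derivative, zero_add, Nat.descFactorial_self, nsmul_eq_mul]
  have hlaguerre : q.eval 0 * (Polynomial.derivative^[2] q).eval 0 <
      (Polynomial.derivative^[1] q).eval 0 ^ 2 :=
    eval_mul_eval_derivative_derivative_nodal_lt (card_pos.1 (by lia)) 0
  have hscale : k ! * (k + 1)! * ((k + 2) * (p.coeff k * p.coeff (k + 2))) <
      k ! * (k + 1)! * ((k + 1) * p.coeff (k + 1) ^ 2) :=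
    calc _ = (0 + k)! * p.coeff (0 + k) * ((2 + k)! * p.coeff (2 + k)) := by
          rw [zero_add, add_comm 2 k, Nat.factorial_succ (k + 1)]
          push_cast
          ring
      _ = c ^ 2 * (q.eval 0 * (Polynomial.derivative^[2] q).eval 0) := by
          rw [← hcoeff, ← hcoeff, Function.iterate_zero_apply]
          ring
      _ < c ^ 2 * (Polynomial.derivative^[1] q).eval 0 ^ 2 := by gcongr
      _ = ((1 + k)! * p.coeff (1 + k)) ^ 2 := by rw [← hcoeff, mul_pow]
      _ = _ := by
          rw [add_comm 1 k, Nat.factorial_succ k]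
          push_cast
          ring
  exact lt_of_mul_lt_mul_left hscale (by positivity)

lemma reverse_nodal {R ι : Type*} [CommRing R] [IsDomain R] (s : Finset ι) (v : ι → R) :
    (nodal s v).reverse = ∏ i ∈ s, (1 - Polynomial.C (v i) * Polynomial.X) := by
  classical
  induction s using Finset.induction_on with
  | empty => rw [nodal_empty, prod_empty, ← Polynomial.C_1, Polynomial.reverse_C]
  | insert i s hi ih =>
    rw [nodal_insert_eq_nodal hi, Polynomial.reverse_mul_of_domain, ih, prod_insert hi,
      sub_eq_add_neg, ← Polynomial.C_neg, Polynomial.reverse_add_C]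
    simp [Polynomial.reverse, sub_eq_add_neg]

variable {K : Type*} [Field K]

lemma prod_Icc_neg_zpow {q : K} (hq : q ≠ 0) (r : ℕ) : ∏ k ∈ Icc (-r : ℤ) r, q ^ k = 1 := by
  refine prod_involution (fun k _ ↦ -k) (fun k _ ↦ ?_) ?_ ?_ (fun k _ ↦ neg_neg k)
  · rw [← zpow_add₀ hq, add_neg_cancel, zpow_zero]
  · rintro k - hk heq
    exact hk (by rw [show k = 0 by lia, zpow_zero])
  · intro k hk
    rw [mem_Icc] at hk ⊢
    lia

lemma reverse_nodal_zpow {q : K} (hq : q ≠ 0) (r : ℕ) :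
    (nodal (Icc (-r : ℤ) r) (q ^ ·)).reverse = -nodal (Icc (-r : ℤ) r) (q ^ ·) := by
  have hfactor (k : ℤ) : 1 - Polynomial.C (q ^ k) * Polynomial.X =
      Polynomial.C (-q ^ k) * (Polynomial.X - Polynomial.C (q ^ (-k))) := by
    rw [mul_sub, ← Polynomial.C_mul, neg_mul, ← zpow_add₀ hq, add_neg_cancel, zpow_zero]
    simp only [Polynomial.C_neg, Polynomial.C_1]
    ring
  have hsymm : ∏ k ∈ Icc (-r : ℤ) r, (Polynomial.X - Polynomial.C (q ^ (-k))) =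
      nodal (Icc (-r : ℤ) r) (q ^ ·) :=
    prod_nbij' (-·) (-·) (by simp; lia) (by simp; lia) (by simp) (by simp) (by simp)
  have hconst : ∏ k ∈ Icc (-r : ℤ) r, -q ^ k = -1 := by
    rw [prod_neg, prod_Icc_neg_zpow hq, Int.card_Icc, mul_one]
    exact Odd.neg_one_pow ⟨r, by lia⟩
  rw [reverse_nodal]
  simp only [hfactor, prod_mul_distrib, hsymm]
  rw [← map_prod, hconst, map_neg, map_one, neg_one_mul]

lemma coeff_add_coeff_nodal_zpow {q : K} (hq : q ≠ 0) (r : ℕ) :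
    (nodal (Icc (-r : ℤ) r) (q ^ ·)).coeff r +
      (nodal (Icc (-r : ℤ) r) (q ^ ·)).coeff (r + 1) = 0 := by
  have hdeg : (nodal (Icc (-r : ℤ) r) (q ^ ·)).natDegree = 2 * r + 1 := by
    rw [natDegree_nodal, Int.card_Icc]
    lia
  have hrev := congrArg (Polynomial.coeff · r) (reverse_nodal_zpow hq r)
  simp only [Polynomial.coeff_reverse, hdeg, Polynomial.coeff_neg] at hrev
  rw [Polynomial.revAt_le (by lia), show 2 * r + 1 - r = r + 1 by lia] at hrev
  rw [hrev, add_neg_cancel]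

lemma exists_X_add_one_mul_nodal_eq [IsAlgClosed K] {n : ℕ} (hn : ((n + 1 : ℕ) : K) ≠ 0) :
    ∃ T : Finset K, #T = n ∧ (Polynomial.X + 1) * nodal T id =
      Polynomial.X ^ (n + 1) - Polynomial.C ((-1) ^ (n + 1)) := by
  classical
  set p : K[X] := Polynomial.X ^ (n + 1) - Polynomial.C ((-1) ^ (n + 1)) with hp
  have hmonic : p.Monic := Polynomial.monic_X_pow_sub_C _ n.succ_ne_zero
  have hsep : p.Separable := Polynomial.separable_X_pow_sub_C _ hn (by simp)
  have hnodal : nodal p.roots.toFinset id = p := by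
    simpa [hmonic.leadingCoeff] using
      C_leadingCoeff_mul_nodal_roots (IsAlgClosed.splits p) (Polynomial.nodup_roots hsep)
  have hmem : (-1 : K) ∈ p.roots.toFinset := by
    rw [Multiset.mem_toFinset, Polynomial.mem_roots hmonic.ne_zero]
    simp [hp]
  have hcard : #p.roots.toFinset = n + 1 := by
    rw [← natDegree_nodal (R := K) (v := id), hnodal, Polynomial.natDegree_X_pow_sub_C]
  refine ⟨p.roots.toFinset.erase (-1),
    by rw [card_erase_of_mem hmem, hcard, Nat.add_sub_cancel], ?_⟩
  have herase := nodal_eq_mul_nodal_erase (v := (id : K → K)) hmem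
  rw [hnodal] at herase
  simpa using herase.symm

end RootSets

section MiddleForm

variable (K : Type*) [Field K]

/-- The binary form `xʳ yʳ (x + y)` of degree `2r + 1`. -/
noncomputable def middleForm (r : ℕ) : MvPolynomial (Fin 2) K :=
  X 0 ^ r * X 1 ^ r * (X 0 + X 1)

/-- The moment functional of `xʳ yʳ (x + y)`: up to a scalar, it adds the coefficients of `Zʳ` and
`Zʳ⁺¹`, written as a single coefficient of `(Z + 1) f` so that products in `f` can be regrouped. -/
noncomputable def middleFunctional (r : ℕ) : K[X] →ₗ[K] K :=
  ((2 * r + 1).choose r : K)⁻¹ •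
    (Polynomial.lcoeff K (r + 1) ∘ₗ LinearMap.mulLeft K (Polynomial.X + 1))

variable {K} [CharZero K]

lemma middleFunctional_eq_zero_iff {r : ℕ} {f : K[X]} :
    middleFunctional K r f = 0 ↔ ((Polynomial.X + 1) * f).coeff (r + 1) = 0 := by
  have hchoose : ((2 * r + 1).choose r : K) ≠ 0 := mod_cast (Nat.choose_pos (by lia)).ne'
  simp [middleFunctional, hchoose]

lemma coeff_succ_X_add_one_mul {R : Type*} [Semiring R] (f : R[X]) (k : ℕ) :
    ((Polynomial.X + 1) * f).coeff (k + 1) = f.coeff k + f.coeff (k + 1) := by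
  rw [add_mul, one_mul, Polynomial.coeff_add, Polynomial.coeff_X_mul]

lemma momentPolynomial_middleFunctional (r : ℕ) :
    momentPolynomial (2 * r + 1) (middleFunctional K r) =
      Polynomial.X ^ r * (Polynomial.X + 1) := by
  have hchoose : ((2 * r + 1).choose r : K) ≠ 0 := mod_cast (Nat.choose_pos (by lia)).ne'
  ext i
  rw [mul_add, ← pow_succ, mul_one, Polynomial.coeff_add, coeff_momentPolynomial]
  simp only [middleFunctional, LinearMap.smul_apply, LinearMap.comp_apply, LinearMap.mulLeft_apply,
    Polynomial.lcoeff_apply, coeff_succ_X_add_one_mul, Polynomial.coeff_X_pow, smul_eq_mul]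
  by_cases hr : i = r
  · simp [hr, hchoose]
  by_cases hr' : i = r + 1
  · simp [hr', Nat.choose_symm_half, hchoose]
  · simp [hr, hr', Ne.symm hr, Ne.symm hr']

lemma momentForm_middleFunctional (r : ℕ) :
    momentForm (2 * r + 1) (middleFunctional K r) = middleForm K r := by
  refine Polynomial.homogenize_eq_of_isHomogeneous ?_ ?_
  · have hmonomial : (X 0 ^ r * X 1 ^ r : MvPolynomial (Fin 2) K).IsHomogeneous (r + r) :=
      (isHomogeneous_X_pow 0 r).mul (isHomogeneous_X_pow 1 r)
    rw [two_mul]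
    exact hmonomial.mul ((isHomogeneous_X K 0).add (isHomogeneous_X K 1))
  · simp [middleForm, momentPolynomial_middleFunctional]

theorem hasWaringDecomposition_middleForm_two_mul_add_one (r : ℕ) :
    HasWaringDecomposition (2 * r + 1) (2 * r + 1) (middleForm K r) := by
  have hcard : #(Icc (-r : ℤ) r) = 2 * r + 1 := by rw [Int.card_Icc]; lia
  have hinj : Function.Injective fun k : ℤ ↦ (2 : K) ^ k := fun k l hkl ↦ by
    have hcast : (((2 : ℚ) ^ k : ℚ) : K) = ((2 : ℚ) ^ l : ℚ) := by simpa using hkl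
    exact zpow_right_injective₀ two_pos (by norm_num) (Rat.cast_injective hcast)
  rw [← momentForm_middleFunctional]
  nth_rw 2 [← hcard]
  refine hasWaringDecomposition_of_annihilates_nodal hinj.injOn fun g hg ↦ ?_
  obtain ⟨b, rfl⟩ := Polynomial.natDegree_eq_zero.1 (show g.natDegree = 0 by lia)
  rw [middleFunctional_eq_zero_iff, ← mul_assoc, Polynomial.coeff_mul_C, coeff_succ_X_add_one_mul,
    coeff_add_coeff_nodal_zpow two_ne_zero, zero_mul]

theorem hasWaringDecomposition_middleForm_add_one [IsAlgClosed K] (r : ℕ) :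
    HasWaringDecomposition (2 * r + 1) (r + 1) (middleForm K r) := by
  obtain ⟨T, hcard, hT⟩ :=
    exists_X_add_one_mul_nodal_eq (K := K) (n := r + 1) (Nat.cast_ne_zero.2 (by lia))
  rw [← momentForm_middleFunctional, ← hcard]
  refine hasWaringDecomposition_of_annihilates_nodal Function.injective_id.injOn fun g hg ↦ ?_
  rw [middleFunctional_eq_zero_iff, ← mul_assoc, hT, sub_mul, Polynomial.coeff_sub,
    Polynomial.coeff_C_mul, Polynomial.coeff_X_pow_mul', if_neg (by lia),
    Polynomial.coeff_eq_zero_of_natDegree_lt (by lia), mul_zero, sub_zero]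

theorem add_one_le_of_hasWaringDecomposition_middleForm {r n : ℕ}
    (h : HasWaringDecomposition (2 * r + 1) n (middleForm K r)) : r + 1 ≤ n := by
  by_contra! hn
  rw [← momentForm_middleFunctional] at h
  obtain ⟨T, hTr, -, hL⟩ := h.exists_annihilating_nodal (Nat.le_of_lt_succ hn)
  set p := nodal T id * Polynomial.X ^ (r - #T)
  have hdeg : p.natDegree = r := by
    rw [nodal_monic.natDegree_mul (Polynomial.monic_X_pow _), natDegree_nodal,
      Polynomial.natDegree_X_pow, Nat.add_sub_cancel' hTr]
  have hzero := middleFunctional_eq_zero_iff.1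
    (hL (Polynomial.X ^ (r - #T)) (by rw [Polynomial.natDegree_X_pow]; lia))
  have hmonic : p.coeff r = 1 := by
    rw [← hdeg, (nodal_monic.mul (Polynomial.monic_X_pow _)).coeff_natDegree]
  rw [coeff_succ_X_add_one_mul, hmonic, Polynomial.coeff_eq_zero_of_natDegree_lt (by lia),
    add_zero] at hzero
  exact one_ne_zero hzero

theorem two_mul_add_one_le_of_hasWaringDecomposition_middleForm {r n : ℕ} (hr : 1 ≤ r)
    (h : HasWaringDecomposition (2 * r + 1) n (middleForm ℝ r)) : 2 * r + 1 ≤ n := by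
  by_contra! hn
  obtain ⟨k, rfl⟩ := Nat.exists_eq_add_of_le' hr
  rw [← momentForm_middleFunctional] at h
  obtain ⟨T, -, hT, hL⟩ := h.exists_annihilating_nodal (Nat.le_of_lt_succ hn)
  have hupper := middleFunctional_eq_zero_iff.1 (hL 1 (by simp))
  have hlower := middleFunctional_eq_zero_iff.1 (hL Polynomial.X (by simp; lia))
  rw [mul_one, coeff_succ_X_add_one_mul] at hupper
  rw [← mul_assoc, Polynomial.coeff_mul_X, coeff_succ_X_add_one_mul] at hlower
  have hnewton := coeff_mul_coeff_add_two_nodal_lt (T := T) (k := k) (by lia)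
  rw [eq_neg_of_add_eq_zero_left hlower, eq_neg_of_add_eq_zero_right hupper] at hnewton
  nlinarith [sq_nonneg ((nodal T id).coeff (k + 1))]

end MiddleForm

theorem real_vs_complex_rank_gap (r : ℕ) (hr : 1 ≤ r) :
    realWaringRank (2 * r + 1) (X (0 : Fin 2) ^ r * X 1 ^ r * (X 0 + X 1)) = 2 * r + 1 ∧
    waringRank (2 * r + 1) (X (0 : Fin 2) ^ r * X 1 ^ r * (X 0 + X 1)) = r + 1 := by
  have hreal : IsLeast {n | HasWaringDecomposition (2 * r + 1) n (middleForm ℝ r)} (2 * r + 1) :=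
    ⟨hasWaringDecomposition_middleForm_two_mul_add_one r,
      fun _ h ↦ two_mul_add_one_le_of_hasWaringDecomposition_middleForm hr h⟩
  have hcomplex : IsLeast {n | HasWaringDecomposition (2 * r + 1) n (middleForm ℂ r)} (r + 1) :=
    ⟨hasWaringDecomposition_middleForm_add_one r,
      fun _ h ↦ add_one_le_of_hasWaringDecomposition_middleForm h⟩
  exact ⟨hreal.csInf_eq, hcomplex.csInf_eq⟩
end

section
/- Fix d ≥ 4 and three pairwise non-proportional linear forms L_1, L_2, L_3 ∈ ℂ[x,y]_1. Then, up to scalar multiplication, there are exactly C(d-1, 2) = (d-1)(d-2)/2 binary forms F ∈ ℂ[x,y]_d with Waring rank two that are divisible by L_1 L_2 L_3. -/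
open MvPolynomial

/-!
A form of Waring rank two is `l ^ d - m ^ d = ∏ (l - ζ m)`, the product over the `d`-th roots of
unity, with `l` and `m` independent. The form determines `l` and `m` up to exchange and scale:
applying the derivations that kill `m` and `m'` to `l ^ d - m ^ d = c (l' ^ d - m' ^ d)` leaves
multiples of `l ^ (d - 2)` and `l' ^ (d - 2)`, so `l'` is proportional to `l` or to `m`. A linear
form `L` divides `l ^ d - m ^ d` exactly when the rational function `l / m` takes a `d`-th root of
unity as value at the root of `L`. So a multiple of `L₁ L₂ L₃` yields three distinct roots of unity,
normalized to `(1, u, v)` by rescaling `m`; conversely they determine `l` and `m` up to a common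
factor, as projectivities of the line are sharply 3-transitive. Exchanging `l` and `m` replaces
`(u, v)` by `(u⁻¹, v⁻¹)`, which reverses the order of the exponents of a primitive root: hence one
form for each `0 < i < j < d`.
-/

section CommRing

variable {R : Type*} [CommRing R]

/-- The determinant of two linear forms given by their coefficients; over a field it vanishes
exactly when the forms are proportional. -/
def wedge : R × R →ₗ[R] R × R →ₗ[R] R :=
  LinearMap.mk₂ R (fun a b ↦ a.1 * b.2 - a.2 * b.1)
    (fun _ _ _ ↦ by simp only [Prod.fst_add, Prod.snd_add]; ring)
    (fun _ _ _ ↦ by simp only [Prod.smul_fst, Prod.smul_snd, smul_eq_mul]; ring)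
    (fun _ _ _ ↦ by simp only [Prod.fst_add, Prod.snd_add]; ring)
    (fun _ _ _ ↦ by simp only [Prod.smul_fst, Prod.smul_snd, smul_eq_mul]; ring)

lemma wedge_apply (a b : R × R) : wedge a b = a.1 * b.2 - a.2 * b.1 := rfl

@[simp]
lemma wedge_self (a : R × R) : wedge a a = 0 := by
  rw [wedge_apply]; ring

lemma wedge_swap (a b : R × R) : wedge b a = -wedge a b := by
  simp only [wedge_apply]; ring

lemma wedge_swap_ne_zero {a b : R × R} (h : wedge a b ≠ 0) : wedge b a ≠ 0 := by
  rwa [wedge_swap, neg_ne_zero]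

/-- The binary linear form `c.1 x + c.2 y`, as a linear function of its coefficients. -/
noncomputable def linearForm : R × R →ₗ[R] MvPolynomial (Fin 2) R where
  toFun c := C c.1 * X 0 + C c.2 * X 1
  map_add' _ _ := by simp only [Prod.fst_add, Prod.snd_add, C_add]; ring
  map_smul' _ _ := by
    simp only [Prod.smul_fst, Prod.smul_snd, smul_eq_mul, C_mul, smul_eq_C_mul, RingHom.id_apply]
    ring

lemma linearForm_apply (c : R × R) : linearForm c = C c.1 * X 0 + C c.2 * X 1 := rfl

lemma linearForm_smul (t : R) (c : R × R) : linearForm (t • c) = C t * linearForm c := by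
  rw [map_smul, smul_eq_C_mul]

lemma isHomogeneous_linearForm (c : R × R) : (linearForm c).IsHomogeneous 1 :=
  (isHomogeneous_C_mul_X c.1 0).add (isHomogeneous_C_mul_X c.2 1)

/-- Evaluation at `(-a.2, a.1)`, which represents the root of the linear form `a`. -/
noncomputable def evalAtRoot (a : R × R) : MvPolynomial (Fin 2) R →+* R :=
  eval ![-a.2, a.1]

@[simp]
lemma evalAtRoot_C (a : R × R) (r : R) : evalAtRoot a (C r) = r := eval_C r

@[simp]
lemma evalAtRoot_linearForm (a b : R × R) : evalAtRoot a (linearForm b) = wedge a b := by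
  simp [evalAtRoot, linearForm_apply, wedge_apply]; ring

/-- The derivation `-a.2 ∂/∂x + a.1 ∂/∂y`, which is apolar to the linear form `a`. -/
noncomputable def apolarDerivation (a : R × R) :
    Derivation R (MvPolynomial (Fin 2) R) (MvPolynomial (Fin 2) R) :=
  mkDerivation R ![C (-a.2), C a.1]

lemma apolarDerivation_C_mul (a : R × R) (r : R) (F : MvPolynomial (Fin 2) R) :
    apolarDerivation a (C r * F) = C r * apolarDerivation a F := by
  rw [← smul_eq_C_mul, Derivation.map_smul, smul_eq_C_mul]

lemma apolarDerivation_linearForm (a b : R × R) :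
    apolarDerivation a (linearForm b) = C (wedge a b) := by
  rw [linearForm_apply, map_add, apolarDerivation_C_mul, apolarDerivation_C_mul]
  simp only [apolarDerivation, mkDerivation_X, Matrix.cons_val_zero, Matrix.cons_val_one,
    wedge_apply, C_sub, C_mul, C_neg]
  ring

lemma apolarDerivation_linearForm_pow (a b : R × R) (n : ℕ) :
    apolarDerivation a (linearForm b ^ n) = C (n * wedge a b) * linearForm b ^ (n - 1) := by
  rw [Derivation.leibniz_pow, apolarDerivation_linearForm, nsmul_eq_mul, smul_eq_mul, C_mul,
    ← map_natCast (C : R →+* MvPolynomial (Fin 2) R)]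
  ring

lemma apolarDerivation_apolarDerivation_linearForm_pow (a b c : R × R) (n : ℕ) :
    apolarDerivation b (apolarDerivation a (linearForm c ^ n)) =
      C (n * (n - 1) * (wedge a c * wedge b c)) * linearForm c ^ (n - 2) := by
  rw [apolarDerivation_linearForm_pow, apolarDerivation_C_mul, apolarDerivation_linearForm_pow,
    ← mul_assoc, ← C_mul, Nat.sub_sub]
  rcases n with _ | n
  · simp only [Nat.cast_zero, zero_mul]
  · rw [Nat.add_sub_cancel, Nat.cast_succ, add_sub_cancel_right]
    congr 2
    ring

/-- The binary form `l ^ d - m ^ d`. -/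
noncomputable def powDiff (d : ℕ) (l m : R × R) : MvPolynomial (Fin 2) R :=
  linearForm l ^ d - linearForm m ^ d

lemma isHomogeneous_powDiff (d : ℕ) (l m : R × R) : (powDiff d l m).IsHomogeneous d := by
  have pow_hom (c : R × R) : (linearForm c ^ d).IsHomogeneous d := by
    simpa only [one_mul] using (isHomogeneous_linearForm c).pow d
  exact (pow_hom l).sub (pow_hom m)

lemma powDiff_swap (d : ℕ) (l m : R × R) : powDiff d m l = -powDiff d l m :=
  (neg_sub _ _).symm

lemma powDiff_smul (d : ℕ) (s : R) (l m : R × R) :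
    powDiff d (s • l) (s • m) = C (s ^ d) * powDiff d l m := by
  simp only [powDiff, linearForm_smul, mul_pow, C_pow, mul_sub]

lemma powDiff_smul_right_of_pow_eq_one {d : ℕ} {t : R} (ht : t ^ d = 1) (l m : R × R) :
    powDiff d l (t • m) = powDiff d l m := by
  rw [powDiff, linearForm_smul, mul_pow, ← C_pow, ht, C_1, one_mul, powDiff]

lemma evalAtRoot_powDiff (d : ℕ) (a l m : R × R) :
    evalAtRoot a (powDiff d l m) = wedge a l ^ d - wedge a m ^ d := by
  simp only [powDiff, map_sub, map_pow, evalAtRoot_linearForm]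

/-- The rational function `l / m` takes the value `u i` at the root of `L i`; denominators are
cleared. -/
def HasRatios {ι : Type*} (L : ι → R × R) (u : ι → R) (l m : R × R) : Prop :=
  ∀ i, wedge (L i) l = u i * wedge (L i) m

lemma HasRatios.wedge_sub_smul {ι : Type*} {L : ι → R × R} {u : ι → R} {l m : R × R}
    (h : HasRatios L u l m) (i : ι) : wedge (L i) (l - u i • m) = 0 := by
  rw [map_sub, map_smul, smul_eq_mul, h i, sub_self]

/-- The Waring rank of a binary form of degree `d` over `R`; if the form is not a linear combination
of `d`-th powers of linear forms, the value is `0`. -/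
noncomputable def binaryWaringRank (d : ℕ) (F : MvPolynomial (Fin 2) R) : ℕ :=
  sInf {r | ∃ (a : Fin r → R) (c : Fin r → R × R), F = ∑ i, C (a i) * linearForm (c i) ^ d}

end CommRing

lemma prod_sub_mul_dvd_pow_sub_pow {R ι : Type*} [CommRing R] [IsDomain R] [Fintype ι] {d : ℕ}
    {ω : R} (hω : IsPrimitiveRoot ω d) (hd : d ≠ 0) {u : ι → R} (hu : Function.Injective u)
    (hud : ∀ i, u i ^ d = 1) (a b : R) : ∏ i, (a - u i * b) ∣ a ^ d - b ^ d := by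
  classical
  have hd₀ : 0 < d := Nat.pos_of_ne_zero hd
  have roots_subset : Finset.univ.image u ⊆ Polynomial.nthRootsFinset d (1 : R) := by
    simpa only [Finset.image_subset_iff, Polynomial.mem_nthRootsFinset hd₀] using fun i _ ↦ hud i
  calc ∏ i, (a - u i * b)
      = ∏ ζ ∈ Finset.univ.image u, (a - ζ * b) := by rw [Finset.prod_image hu.injOn]
    _ ∣ ∏ ζ ∈ Polynomial.nthRootsFinset d (1 : R), (a - ζ * b) :=
        Finset.prod_dvd_prod_of_subset _ _ _ roots_subset
    _ = a ^ d - b ^ d := (hω.pow_sub_pow_eq_prod_sub_mul a b hd₀).symm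

section Field

variable {K : Type*} [Field K] {d : ℕ} {l m l' m' : K × K}

lemma exists_eq_smul_of_wedge_eq_zero {a b : K × K} (ha : a ≠ 0) (h : wedge a b = 0) :
    ∃ t : K, b = t • a := by
  rw [wedge_apply] at h
  by_cases ha₁ : a.1 = 0
  · have ha₂ : a.2 ≠ 0 := fun ha₂ ↦ ha (Prod.ext ha₁ ha₂)
    have hb₁ : b.1 = 0 := by simpa [ha₁, ha₂] using h
    exact ⟨b.2 / a.2, Prod.ext (by simp [ha₁, hb₁]) (by simp [ha₂])⟩
  · refine ⟨b.1 / a.1, Prod.ext (by simp [ha₁]) ?_⟩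
    rw [Prod.smul_snd, smul_eq_mul, div_mul_eq_mul_div, eq_div_iff ha₁]
    linear_combination h

lemma eq_zero_of_wedge_eq_zero {a b c : K × K} (hab : wedge a b ≠ 0) (ha : wedge a c = 0)
    (hb : wedge b c = 0) : c = 0 := by
  have cramer : wedge a b • c = wedge a c • b - wedge b c • a := by
    ext <;> simp [wedge_apply] <;> ring
  rw [ha, hb, zero_smul, zero_smul, sub_zero] at cramer
  exact (smul_eq_zero.mp cramer).resolve_left hab

lemma wedge_eq_zero_of_common {a b c : K × K} (ha : a ≠ 0) (hb : wedge a b = 0)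
    (hc : wedge a c = 0) : wedge b c = 0 := by
  by_contra hbc
  exact ha (eq_zero_of_wedge_eq_zero hbc (by rw [wedge_swap, hb, neg_zero])
    (by rw [wedge_swap, hc, neg_zero]))

lemma left_ne_zero_of_wedge_ne_zero {a b : K × K} (h : wedge a b ≠ 0) : a ≠ 0 := by
  rintro rfl
  exact h (LinearMap.map_zero₂ wedge b)

lemma right_ne_zero_of_wedge_ne_zero {a b : K × K} (h : wedge a b ≠ 0) : b ≠ 0 :=
  left_ne_zero_of_wedge_ne_zero (wedge_swap_ne_zero h)

lemma powDiff_ne_zero (hd : d ≠ 0) (hlm : wedge l m ≠ 0) : powDiff d l m ≠ 0 := by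
  intro h
  have h_eval := congrArg (evalAtRoot l) h
  rw [evalAtRoot_powDiff, wedge_self, zero_pow hd, zero_sub, map_zero, neg_eq_zero] at h_eval
  exact hlm (eq_zero_of_pow_eq_zero h_eval)

lemma wedge_eq_zero_of_powDiff_eq {c : K} (hd : (d : K) * (d - 1) ≠ 0) (hd₃ : 3 ≤ d)
    (hc : c ≠ 0) (hlm' : wedge l' m' ≠ 0) (h : powDiff d l m = C c * powDiff d l' m') :
    wedge l l' = 0 ∨ wedge m l' = 0 := by
  have key := congrArg
    (fun F ↦ evalAtRoot l (apolarDerivation m' (apolarDerivation m F))) h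
  simp only [powDiff, apolarDerivation_C_mul, map_sub,
    apolarDerivation_apolarDerivation_linearForm_pow, map_mul (evalAtRoot l), map_pow,
    evalAtRoot_C, evalAtRoot_linearForm, wedge_self, zero_mul, mul_zero, sub_zero,
    zero_pow (show d - 2 ≠ 0 by lia)] at key
  have hml' : wedge m' l' ≠ 0 := wedge_swap_ne_zero hlm'
  by_contra! hne
  exact mul_ne_zero hc (mul_ne_zero (mul_ne_zero hd (mul_ne_zero hne.2 hml'))
    (pow_ne_zero (d - 2) hne.1)) key.symm

lemma exists_eq_smul_of_powDiff_eq {c : K} (hd : (d : K) * (d - 1) ≠ 0) (hd₃ : 3 ≤ d)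
    (hc : c ≠ 0) (hlm : wedge l m ≠ 0) (hlm' : wedge l' m' ≠ 0)
    (h : powDiff d l m = C c * powDiff d l' m') :
    ∃ s t : K, (l' = s • l ∧ m' = t • m) ∨ (l' = s • m ∧ m' = t • l) := by
  have hl : l ≠ 0 := left_ne_zero_of_wedge_ne_zero hlm
  have hm : m ≠ 0 := right_ne_zero_of_wedge_ne_zero hlm
  have h_swap : powDiff d l m = C (-c) * powDiff d m' l' := by
    rw [h, powDiff_swap d l' m', C_neg, neg_mul_neg]
  rcases wedge_eq_zero_of_powDiff_eq hd hd₃ hc hlm' h with hll' | hml' <;>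
    rcases wedge_eq_zero_of_powDiff_eq hd hd₃ (neg_ne_zero.mpr hc) (wedge_swap_ne_zero hlm') h_swap
      with hlm'' | hmm'
  · exact absurd (wedge_eq_zero_of_common hl hll' hlm'') hlm'
  · obtain ⟨s, hs⟩ := exists_eq_smul_of_wedge_eq_zero hl hll'
    obtain ⟨t, ht⟩ := exists_eq_smul_of_wedge_eq_zero hm hmm'
    exact ⟨s, t, .inl ⟨hs, ht⟩⟩
  · obtain ⟨s, hs⟩ := exists_eq_smul_of_wedge_eq_zero hm hml'
    obtain ⟨t, ht⟩ := exists_eq_smul_of_wedge_eq_zero hl hlm''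
    exact ⟨s, t, .inr ⟨hs, ht⟩⟩
  · exact absurd (wedge_eq_zero_of_common hm hml' hmm') hlm'

lemma powDiff_ne_C_mul_linearForm_pow (hd : (d : K) ≠ 0) (hd₂ : 2 ≤ d) (hlm : wedge l m ≠ 0)
    (a : K) (n : K × K) : powDiff d l m ≠ C a * linearForm n ^ d := by
  intro h
  have key (b : K × K) := congrArg (fun F ↦ evalAtRoot b (apolarDerivation n F)) h
  simp only [powDiff, apolarDerivation_C_mul, map_sub, apolarDerivation_linearForm_pow,
    map_mul (evalAtRoot _), map_pow, evalAtRoot_C, evalAtRoot_linearForm, wedge_self, zero_mul,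
    mul_zero] at key
  have hd₁ : d - 1 ≠ 0 := by lia
  have hnm : wedge n m = 0 := by
    simpa [zero_pow hd₁, hd, hlm, hd₁] using key l
  have hnl : wedge n l = 0 := by
    simpa [zero_pow hd₁, hd, wedge_swap_ne_zero hlm, hd₁] using key m
  have hn : n = 0 := eq_zero_of_wedge_eq_zero hlm (by rw [wedge_swap, hnl, neg_zero])
    (by rw [wedge_swap, hnm, neg_zero])
  have hd₀ : d ≠ 0 := by lia
  exact powDiff_ne_zero hd₀ hlm (by rw [h, hn, map_zero, zero_pow hd₀, mul_zero])

lemma binaryWaringRank_powDiff (hd : (d : K) ≠ 0) (hd₂ : 2 ≤ d) (hlm : wedge l m ≠ 0) :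
    binaryWaringRank d (powDiff d l m) = 2 := by
  have hmem : 2 ∈ {r | ∃ (a : Fin r → K) (c : Fin r → K × K),
      powDiff d l m = ∑ i, C (a i) * linearForm (c i) ^ d} :=
    ⟨![1, -1], ![l, m], by simp [Fin.sum_univ_two, powDiff, sub_eq_add_neg]⟩
  refine le_antisymm (Nat.sInf_le hmem) (le_csInf ⟨2, hmem⟩ ?_)
  rintro r ⟨a, c, hF⟩
  by_contra! hr
  interval_cases r
  · exact powDiff_ne_zero (two_pos.trans_le hd₂).ne' hlm (by rw [hF, Fin.sum_univ_zero])
  · exact powDiff_ne_C_mul_linearForm_pow hd hd₂ hlm (a 0) (c 0) (by rw [hF, Fin.sum_univ_one])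

lemma exists_eq_powDiff_of_binaryWaringRank_eq_two [IsAlgClosed K] (hd : d ≠ 0)
    {F : MvPolynomial (Fin 2) K} (hF : binaryWaringRank d F = 2) :
    ∃ l m : K × K, wedge l m ≠ 0 ∧ F = powDiff d l m := by
  have rank_ne_one (a : K) (n : K × K) : F ≠ C a * linearForm n ^ d := by
    intro h
    have : binaryWaringRank d F ≤ 1 := Nat.sInf_le ⟨fun _ ↦ a, fun _ ↦ n, by simpa using h⟩
    lia
  have hpos : 0 < binaryWaringRank d F := hF ▸ two_pos
  have hmem := Nat.sInf_mem (Nat.nonempty_of_pos_sInf hpos)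
  rw [← binaryWaringRank, hF] at hmem
  obtain ⟨a, c, hac⟩ := hmem
  obtain ⟨z, hz⟩ := IsAlgClosed.exists_pow_nat_eq (a 0) (Nat.pos_of_ne_zero hd)
  obtain ⟨w, hw⟩ := IsAlgClosed.exists_pow_nat_eq (-a 1) (Nat.pos_of_ne_zero hd)
  have hF' : F = powDiff d (z • c 0) (w • c 1) := by
    rw [hac, Fin.sum_univ_two, powDiff, linearForm_smul, linearForm_smul, mul_pow, mul_pow,
      ← C_pow, ← C_pow, hz, hw, C_neg, neg_mul, sub_neg_eq_add]
  refine ⟨_, _, fun h_wedge ↦ ?_, hF'⟩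
  rcases eq_or_ne (z • c 0) 0 with hl | hl
  · apply rank_ne_one (-1) (w • c 1)
    rw [hF', hl, powDiff, map_zero, zero_pow hd, zero_sub, C_neg, C_1, neg_one_mul]
  · obtain ⟨t, ht⟩ := exists_eq_smul_of_wedge_eq_zero hl h_wedge
    apply rank_ne_one (1 - t ^ d) (z • c 0)
    rw [hF', ht, powDiff, linearForm_smul t, mul_pow, C_sub, C_1, C_pow, sub_mul, one_mul]

lemma pairwise_wedge_ne_zero {a b c : K × K} (hab : wedge a b ≠ 0) (hbc : wedge b c ≠ 0)
    (hac : wedge a c ≠ 0) : Pairwise fun i j ↦ wedge (![a, b, c] i) (![a, b, c] j) ≠ 0 := by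
  intro i j hij
  fin_cases i <;> fin_cases j
  exacts [absurd rfl hij, hab, hac, wedge_swap_ne_zero hab, absurd rfl hij, hbc,
    wedge_swap_ne_zero hac, wedge_swap_ne_zero hbc, absurd rfl hij]

section Ratios

variable {ι : Type*} {L : ι → K × K} {u u' : ι → K}

lemma HasRatios.wedge_ne_zero (h : HasRatios L u l m) (hlm : wedge l m ≠ 0) {i : ι}
    (hL : L i ≠ 0) : wedge (L i) m ≠ 0 := by
  intro hm
  have hl : wedge (L i) l = 0 := by rw [h i, hm, mul_zero]
  exact hlm (wedge_eq_zero_of_common hL hl hm)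

lemma HasRatios.swap (h : HasRatios L u l m) (hu : ∀ i, u i ≠ 0) : HasRatios L u⁻¹ m l :=
  fun i ↦ by rw [h i, Pi.inv_apply, inv_mul_cancel_left₀ (hu i)]

lemma HasRatios.injective (hL : Pairwise fun i j ↦ wedge (L i) (L j) ≠ 0) (hlm : wedge l m ≠ 0)
    (h : HasRatios L u l m) : Function.Injective u := by
  intro i j hij
  by_contra hne
  have h_eq : l - u i • m = 0 := eq_zero_of_wedge_eq_zero (hL hne) (h.wedge_sub_smul i)
    (hij ▸ h.wedge_sub_smul j)
  rw [sub_eq_zero.mp h_eq, LinearMap.map_smul₂, wedge_self, smul_zero] at hlm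
  exact hlm rfl

lemma HasRatios.eq_or_mul_eq_one (hL : ∀ i, L i ≠ 0) {c : K} (hd : (d : K) * (d - 1) ≠ 0)
    (hd₃ : 3 ≤ d) (hc : c ≠ 0) (hlm : wedge l m ≠ 0) (hlm' : wedge l' m' ≠ 0)
    (h : HasRatios L u l m) (h' : HasRatios L u' l' m')
    {i₀ : ι} (hu : u i₀ = 1) (hu' : u' i₀ = 1)
    (h_eq : powDiff d l m = C c * powDiff d l' m') :
    u = u' ∨ u * u' = 1 := by
  have hm (i : ι) : wedge (L i) m ≠ 0 := h.wedge_ne_zero hlm (hL i)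
  obtain ⟨s, t, ⟨rfl, rfl⟩ | ⟨rfl, rfl⟩⟩ :=
    exists_eq_smul_of_powDiff_eq hd hd₃ hc hlm hlm' h_eq
  · have ht : t ≠ 0 := left_ne_zero_of_smul (right_ne_zero_of_wedge_ne_zero hlm')
    have h_ratio (i : ι) : s * u i = t * u' i := by
      have := h' i
      rw [map_smul, map_smul, smul_eq_mul, smul_eq_mul, h i] at this
      exact mul_right_cancel₀ (hm i) (by linear_combination this)
    have hst : s = t := by simpa [hu, hu'] using h_ratio i₀
    exact .inl (funext fun i ↦ mul_left_cancel₀ ht (hst ▸ h_ratio i))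
  · have ht : t ≠ 0 := left_ne_zero_of_smul (right_ne_zero_of_wedge_ne_zero hlm')
    have h_ratio (i : ι) : t * (u i * u' i) = s := by
      have := h' i
      rw [map_smul, map_smul, smul_eq_mul, smul_eq_mul, h i] at this
      exact mul_right_cancel₀ (hm i) (by linear_combination -this)
    have hst : t = s := by simpa [hu, hu'] using h_ratio i₀
    exact .inr (funext fun i ↦ mul_left_cancel₀ ht
      (by rw [Pi.mul_apply, Pi.one_apply, h_ratio i, mul_one, hst]))

lemma HasRatios.prod_linearForm_dvd [Fintype ι] (hL : ∀ i, L i ≠ 0) (h : HasRatios L u l m)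
    (hu : Function.Injective u) {ω : K} (hω : IsPrimitiveRoot ω d) (hd : d ≠ 0)
    (hud : ∀ i, u i ^ d = 1) : ∏ i, linearForm (L i) ∣ powDiff d l m := by
  have factor_dvd (i : ι) : linearForm (L i) ∣ linearForm l - C (u i) * linearForm m := by
    obtain ⟨s, hs⟩ := exists_eq_smul_of_wedge_eq_zero (hL i) (h.wedge_sub_smul i)
    rw [← linearForm_smul, ← map_sub, hs, linearForm_smul]
    exact dvd_mul_left _ _
  have hCω : IsPrimitiveRoot (C ω : MvPolynomial (Fin 2) K) d :=
    hω.map_of_injective (C_injective (Fin 2) K)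
  exact (Finset.prod_dvd_prod_of_dvd _ _ fun i _ ↦ factor_dvd i).trans
    (prod_sub_mul_dvd_pow_sub_pow hCω hd ((C_injective (Fin 2) K).comp hu)
      (fun i ↦ by rw [Function.comp_apply, ← C_pow, hud i, C_1]) _ _)

lemma exists_hasRatios_of_linearForm_dvd (hL : ∀ i, L i ≠ 0) (hd : d ≠ 0) (hlm : wedge l m ≠ 0)
    (h : ∀ i, linearForm (L i) ∣ powDiff d l m) :
    ∃ u : ι → K, (∀ i, u i ^ d = 1) ∧ HasRatios L u l m := by
  have pow_eq (i : ι) : wedge (L i) l ^ d = wedge (L i) m ^ d := by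
    have := map_dvd (evalAtRoot (L i)) (h i)
    rwa [evalAtRoot_linearForm, wedge_self, zero_dvd_iff, evalAtRoot_powDiff, sub_eq_zero] at this
  have hm (i : ι) : wedge (L i) m ≠ 0 := by
    intro hm
    have hl : wedge (L i) l = 0 :=
      eq_zero_of_pow_eq_zero (by rw [pow_eq i, hm, zero_pow hd] : wedge (L i) l ^ d = 0)
    exact hlm (wedge_eq_zero_of_common (hL i) hl hm)
  exact ⟨fun i ↦ wedge (L i) l / wedge (L i) m,
    fun i ↦ by rw [div_pow, pow_eq i, div_self (pow_ne_zero d (hm i))],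
    fun i ↦ (div_mul_cancel₀ _ (hm i)).symm⟩

end Ratios

section ThreePoints

variable {L : Fin 3 → K × K} {u : Fin 3 → K}

lemma exists_hasRatios (hL : Pairwise fun i j ↦ wedge (L i) (L j) ≠ 0)
    (hu : Function.Injective u) : ∃ l m, wedge l m ≠ 0 ∧ HasRatios L u l m := by
  -- Eliminate `L 2` between `l - u i • m = s i • L i`, using the linear relation among the `L i`.
  set α := wedge (L 2) (L 0) * (u 1 - u 2) with hα
  set β := wedge (L 1) (L 2) * (u 2 - u 0) with hβ
  have hα₀ : α ≠ 0 := mul_ne_zero (hL (by decide)) (sub_ne_zero.mpr (hu.ne (by decide)))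
  have hβ₀ : β ≠ 0 := mul_ne_zero (hL (by decide)) (sub_ne_zero.mpr (hu.ne (by decide)))
  refine ⟨(α * u 0) • L 1 - (β * u 1) • L 0, α • L 1 - β • L 0, ?_, ?_⟩
  · have h_det : wedge ((α * u 0) • L 1 - (β * u 1) • L 0) (α • L 1 - β • L 0) =
        α * β * wedge (L 0) (L 1) * (u 0 - u 1) := by
      simp only [wedge_apply, Prod.fst_sub, Prod.snd_sub, Prod.smul_fst, Prod.smul_snd,
        smul_eq_mul]
      ring
    rw [h_det]
    exact mul_ne_zero (mul_ne_zero (mul_ne_zero hα₀ hβ₀) (hL (by decide)))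
      (sub_ne_zero.mpr (hu.ne (by decide)))
  · intro i
    simp only [hα, hβ, wedge_apply, Prod.fst_sub, Prod.snd_sub, Prod.smul_fst, Prod.smul_snd,
      smul_eq_mul]
    fin_cases i <;> simp only [Fin.zero_eta, Fin.mk_one, Fin.reduceFinMk] <;> ring

lemma HasRatios.exists_eq_smul (hL : ∀ i, L i ≠ 0) (hu : Function.Injective u)
    (hlm : wedge l m ≠ 0) (h : HasRatios L u l m) (h' : HasRatios L u l' m') :
    ∃ s : K, l' = s • l ∧ m' = s • m := by
  -- `l - u i • m` and `l' - u i • m'` are both proportional to `L i`, so the quadratic polynomial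
  -- `wedge (l - x • m) (l' - x • m')` in `x` has the three roots `u i` and vanishes identically.
  have h_coeff : ![wedge l l', -(wedge l m' + wedge m l'), wedge m m'] = 0 := by
    refine Matrix.eq_zero_of_forall_index_sum_pow_mul_eq_zero hu fun i ↦ ?_
    have := wedge_eq_zero_of_common (hL i) (h.wedge_sub_smul i) (h'.wedge_sub_smul i)
    simp only [wedge_apply, Prod.fst_sub, Prod.snd_sub, Prod.smul_fst, Prod.smul_snd,
      smul_eq_mul] at this
    simp only [Fin.sum_univ_three, Matrix.cons_val, Fin.val_zero, Fin.val_one, Fin.val_two,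
      wedge_apply]
    linear_combination this
  have hll' : wedge l l' = 0 := congrFun h_coeff 0
  have h_mixed : -(wedge l m' + wedge m l') = 0 := congrFun h_coeff 1
  have hmm' : wedge m m' = 0 := congrFun h_coeff 2
  obtain ⟨s, rfl⟩ := exists_eq_smul_of_wedge_eq_zero (left_ne_zero_of_wedge_ne_zero hlm) hll'
  obtain ⟨t, rfl⟩ := exists_eq_smul_of_wedge_eq_zero (right_ne_zero_of_wedge_ne_zero hlm) hmm'
  rw [map_smul, map_smul, smul_eq_mul, smul_eq_mul, wedge_swap l m] at h_mixed
  have hst : s = t := mul_right_cancel₀ hlm (by linear_combination h_mixed)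
  exact ⟨s, rfl, by rw [hst]⟩

lemma HasRatios.exists_powDiff_eq_C_mul (hL : ∀ i, L i ≠ 0) (hu : Function.Injective u)
    (hlm : wedge l m ≠ 0) (hlm' : wedge l' m' ≠ 0) (h : HasRatios L u l m)
    (h' : HasRatios L u l' m') (d : ℕ) :
    ∃ c : K, c ≠ 0 ∧ powDiff d l' m' = C c * powDiff d l m := by
  obtain ⟨s, rfl, rfl⟩ := h.exists_eq_smul hL hu hlm h'
  have hs : s ≠ 0 := left_ne_zero_of_smul (left_ne_zero_of_wedge_ne_zero hlm')
  exact ⟨s ^ d, pow_ne_zero d hs, powDiff_smul d s l m⟩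

end ThreePoints

section RootTriples

/-- The pairs `(i, j)` with `0 < i < j < d`: for a primitive `d`-th root of unity `ω` they list
the triples `(1, ω ^ i, ω ^ j)` of distinct `d`-th roots of unity, one from each pair of mutually
inverse triples. -/
def exponentPairs (d : ℕ) : Finset (ℕ × ℕ) :=
  {p ∈ Finset.Ioo 0 d ×ˢ Finset.Ioo 0 d | p.1 < p.2}

lemma mem_exponentPairs {p : ℕ × ℕ} : p ∈ exponentPairs d ↔ 0 < p.1 ∧ p.1 < p.2 ∧ p.2 < d := by
  simp only [exponentPairs, Finset.mem_filter, Finset.mem_product, Finset.mem_Ioo]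
  lia

lemma card_exponentPairs (d : ℕ) : (exponentPairs d).card = (d - 1).choose 2 := by
  rw [exponentPairs, Finset.card_product_filter_lt, Nat.card_Ioo, Nat.sub_zero]

/-- The triple `(1, ω ^ i, ω ^ j)` attached to a pair of exponents `(i, j)`. -/
def rootTriple (ω : K) (p : ℕ × ℕ) : Fin 3 → K :=
  ![1, ω ^ p.1, ω ^ p.2]

variable {ω : K} {p q : ℕ × ℕ}

lemma rootTriple_injective (hω : IsPrimitiveRoot ω d) (hp : p ∈ exponentPairs d) :
    Function.Injective (rootTriple ω p) := by
  obtain ⟨hp₀, hp₁₂, hp₂⟩ := mem_exponentPairs.mp hp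
  have h₁ : ω ^ p.1 ≠ 1 := hω.pow_ne_one_of_pos_of_lt hp₀.ne' (hp₁₂.trans hp₂)
  have h₂ : ω ^ p.2 ≠ 1 := hω.pow_ne_one_of_pos_of_lt (hp₀.trans hp₁₂).ne' hp₂
  have h₁₂ : ω ^ p.1 ≠ ω ^ p.2 := fun h ↦ hp₁₂.ne (hω.pow_inj (hp₁₂.trans hp₂) hp₂ h)
  intro i j hij
  fin_cases i <;> fin_cases j <;> simp_all [rootTriple, eq_comm]

lemma rootTriple_pow (hω : IsPrimitiveRoot ω d) (i : Fin 3) : rootTriple ω p i ^ d = 1 := by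
  fin_cases i <;> simp [rootTriple, pow_right_comm _ _ d, hω.pow_eq_one]

lemma eq_of_rootTriple_eq (hω : IsPrimitiveRoot ω d) (hp : p ∈ exponentPairs d)
    (hq : q ∈ exponentPairs d) (h : rootTriple ω p = rootTriple ω q) : p = q := by
  rw [mem_exponentPairs] at hp hq
  exact Prod.ext
    (hω.pow_inj (hp.2.1.trans hp.2.2) (hq.2.1.trans hq.2.2) (congrFun h 1))
    (hω.pow_inj hp.2.2 hq.2.2 (congrFun h 2))

lemma rootTriple_mul_ne_one (hω : IsPrimitiveRoot ω d) (hp : p ∈ exponentPairs d)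
    (hq : q ∈ exponentPairs d) : rootTriple ω p * rootTriple ω q ≠ 1 := by
  intro h
  rw [mem_exponentPairs] at hp hq
  have add_eq {i j : ℕ} (hi : 0 < i) (hid : i < d) (hjd : j < d) (hij : ω ^ i * ω ^ j = 1) :
      i + j = d := by
    rw [← pow_add, hω.pow_eq_one_iff_dvd] at hij
    exact Nat.eq_of_dvd_of_lt_two_mul (by lia) hij (by lia)
  have h₁ : p.1 + q.1 = d := add_eq hp.1 (by lia) (by lia) (congrFun h 1)
  have h₂ : p.2 + q.2 = d := add_eq (by lia) hp.2.2 hq.2.2 (congrFun h 2)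
  lia

lemma exists_rootTriple_eq_or_eq_inv (hω : IsPrimitiveRoot ω d) (hd : d ≠ 0) {u : Fin 3 → K}
    (hu : Function.Injective u) (hud : ∀ i, u i ^ d = 1) (hu₀ : u 0 = 1) :
    ∃ p ∈ exponentPairs d, rootTriple ω p = u ∨ rootTriple ω p = u⁻¹ := by
  have : NeZero d := ⟨hd⟩
  obtain ⟨i, hi, hui⟩ := hω.eq_pow_of_pow_eq_one (hud 1)
  obtain ⟨j, hj, huj⟩ := hω.eq_pow_of_pow_eq_one (hud 2)
  have hi₀ : i ≠ 0 := fun h ↦ hu.ne (show (0 : Fin 3) ≠ 1 by decide)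
    (by rw [hu₀, ← hui, h, pow_zero])
  have hj₀ : j ≠ 0 := fun h ↦ hu.ne (show (0 : Fin 3) ≠ 2 by decide)
    (by rw [hu₀, ← huj, h, pow_zero])
  have hij : i ≠ j := fun h ↦ hu.ne (show (1 : Fin 3) ≠ 2 by decide) (by rw [← hui, ← huj, h])
  have pow_sub {k : ℕ} (hk : k < d) : ω ^ (d - k) = (ω ^ k)⁻¹ := by
    rw [pow_sub₀ ω (hω.ne_zero hd) hk.le, hω.pow_eq_one, one_mul]
  rcases hij.lt_or_gt with h | h
  · refine ⟨(i, j), mem_exponentPairs.mpr (by lia), .inl (funext fun k ↦ ?_)⟩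
    fin_cases k
    exacts [hu₀.symm, hui, huj]
  · refine ⟨(d - i, d - j), mem_exponentPairs.mpr (by lia), .inr (funext fun k ↦ ?_)⟩
    fin_cases k
    · simp [rootTriple, hu₀]
    · simp [rootTriple, pow_sub hi, hui]
    · simp [rootTriple, pow_sub hj, huj]

end RootTriples

section Count

variable {ω : K} {L : Fin 3 → K × K}

lemma ne_zero_of_pairwise_wedge_ne_zero {ι : Type*} [Nontrivial ι] {L : ι → K × K}
    (hL : Pairwise fun i j ↦ wedge (L i) (L j) ≠ 0) (i : ι) : L i ≠ 0 := by
  obtain ⟨j, hj⟩ := exists_ne i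
  exact right_ne_zero_of_wedge_ne_zero (hL hj)

lemma exists_hasRatios_rootTriple_of_dvd [IsAlgClosed K] (hω : IsPrimitiveRoot ω d) (hd : d ≠ 0)
    (hL : Pairwise fun i j ↦ wedge (L i) (L j) ≠ 0) {F : MvPolynomial (Fin 2) K}
    (hF : binaryWaringRank d F = 2) (h_dvd : ∏ i, linearForm (L i) ∣ F) :
    ∃ p ∈ exponentPairs d, ∃ l m, wedge l m ≠ 0 ∧ HasRatios L (rootTriple ω p) l m ∧
      ∃ c : K, c ≠ 0 ∧ F = C c * powDiff d l m := by
  have factor_dvd (i : Fin 3) : linearForm (L i) ∣ F :=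
    (Finset.dvd_prod_of_mem (fun i ↦ linearForm (L i)) (Finset.mem_univ i)).trans h_dvd
  obtain ⟨l, m, hlm, rfl⟩ := exists_eq_powDiff_of_binaryWaringRank_eq_two hd hF
  obtain ⟨u, hud, hu⟩ :=
    exists_hasRatios_of_linearForm_dvd (ne_zero_of_pairwise_wedge_ne_zero hL) hd hlm factor_dvd
  have hu₀ (i : Fin 3) : u i ≠ 0 := fun h ↦ by simpa [h, hd] using hud i
  have hm : powDiff d l (u 0 • m) = powDiff d l m := powDiff_smul_right_of_pow_eq_one (hud 0) l m
  have hlm₀ : wedge l (u 0 • m) ≠ 0 := by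
    rw [map_smul]
    exact smul_ne_zero (hu₀ 0) hlm
  have hv : HasRatios L (fun i ↦ u i / u 0) l (u 0 • m) := fun i ↦ by
    rw [hu i, map_smul, smul_eq_mul, ← mul_assoc, div_mul_cancel₀ _ (hu₀ 0)]
  obtain ⟨p, hp, hpv | hpv⟩ := exists_rootTriple_eq_or_eq_inv hω hd (hv.injective hL hlm₀)
    (fun i ↦ by rw [div_pow, hud, hud, div_one]) (div_self (hu₀ 0))
  · exact ⟨p, hp, l, u 0 • m, hlm₀, hpv ▸ hv, 1, one_ne_zero, by rw [hm, C_1, one_mul]⟩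
  · refine ⟨p, hp, u 0 • m, l, wedge_swap_ne_zero hlm₀,
      hpv ▸ hv.swap fun i ↦ div_ne_zero (hu₀ i) (hu₀ 0), -1, neg_ne_zero.mpr one_ne_zero, ?_⟩
    rw [powDiff_swap d l, hm, C_neg, C_1, neg_one_mul, neg_neg]

lemma eq_of_powDiff_eq_C_mul (hω : IsPrimitiveRoot ω d) (hd : (d : K) * (d - 1) ≠ 0)
    (hL : ∀ i, L i ≠ 0) {p q : ℕ × ℕ} (hp : p ∈ exponentPairs d) (hq : q ∈ exponentPairs d)
    (hlm : wedge l m ≠ 0) (hlm' : wedge l' m' ≠ 0) (h : HasRatios L (rootTriple ω p) l m)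
    (h' : HasRatios L (rootTriple ω q) l' m') {c : K} (hc : c ≠ 0)
    (h_eq : powDiff d l m = C c * powDiff d l' m') : p = q := by
  have hd₃ : 3 ≤ d := by
    have := mem_exponentPairs.mp hp
    lia
  rcases h.eq_or_mul_eq_one hL hd hd₃ hc hlm hlm' h' (i₀ := 0) rfl rfl h_eq with h_triple | h_triple
  · exact eq_of_rootTriple_eq hω hp hq h_triple
  · exact absurd h_triple (rootTriple_mul_ne_one hω hp hq)

end Count

end Field

theorem rank_two_multiples_count_general {K : Type*} [Field K] [IsAlgClosed K] {d : ℕ}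
    (hd : (d : K) * (d - 1) ≠ 0) (L : Fin 3 → K × K)
    (hL : Pairwise fun i j ↦ wedge (L i) (L j) ≠ 0) :
    ∃ S : Finset (MvPolynomial (Fin 2) K),
      S.card = (d - 1).choose 2 ∧
      (∀ G ∈ S, G.IsHomogeneous d ∧ binaryWaringRank d G = 2 ∧ ∏ i, linearForm (L i) ∣ G) ∧
      (∀ F : MvPolynomial (Fin 2) K, binaryWaringRank d F = 2 →
        ∏ i, linearForm (L i) ∣ F → ∃ G ∈ S, ∃ c : K, c ≠ 0 ∧ F = C c * G) ∧
      (∀ G ∈ S, ∀ G' ∈ S, (∃ c : K, c ≠ 0 ∧ G = C c * G') → G = G') := by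
  classical
  have hdK : (d : K) ≠ 0 := left_ne_zero_of_mul hd
  have hd₀ : d ≠ 0 := fun h ↦ hdK (by rw [h, Nat.cast_zero])
  have hd₁ : d ≠ 1 := fun h ↦ hd (by rw [h, Nat.cast_one, sub_self, mul_zero])
  have hL₀ := ne_zero_of_pairwise_wedge_ne_zero hL
  have : NeZero (d : K) := ⟨hdK⟩
  obtain ⟨ω, hω⟩ := HasEnoughRootsOfUnity.exists_primitiveRoot K d
  have h_exists (p) (hp : p ∈ exponentPairs d) :=
    exists_hasRatios hL (rootTriple_injective hω hp)
  choose! l m hlm h_ratios using h_exists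
  have h_inj (p) (hp : p ∈ exponentPairs d) (q) (hq : q ∈ exponentPairs d) (c : K) (hc : c ≠ 0) :
      powDiff d (l p) (m p) = C c * powDiff d (l q) (m q) → p = q :=
    eq_of_powDiff_eq_C_mul hω hd hL₀ hp hq (hlm p hp) (hlm q hq) (h_ratios p hp) (h_ratios q hq) hc
  refine ⟨(exponentPairs d).image fun p ↦ powDiff d (l p) (m p), ?_, ?_, ?_, ?_⟩
  · rw [Finset.card_image_of_injOn, card_exponentPairs]
    exact fun p hp q hq h ↦ h_inj p hp q hq 1 one_ne_zero (by rw [C_1, one_mul]; exact h)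
  · refine Finset.forall_mem_image.mpr fun p hp ↦ ⟨isHomogeneous_powDiff d _ _,
      binaryWaringRank_powDiff hdK (by lia) (hlm p hp), ?_⟩
    exact (h_ratios p hp).prod_linearForm_dvd hL₀ (rootTriple_injective hω hp) hω hd₀
      (rootTriple_pow hω)
  · intro F hF h_dvd
    obtain ⟨p, hp, l', m', hlm', h', c, hc, rfl⟩ :=
      exists_hasRatios_rootTriple_of_dvd hω hd₀ hL hF h_dvd
    obtain ⟨c', hc', h_eq⟩ := (h_ratios p hp).exists_powDiff_eq_C_mul hL₀
      (rootTriple_injective hω hp) (hlm p hp) hlm' h' d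
    exact ⟨powDiff d (l p) (m p), Finset.mem_image_of_mem _ hp, c * c', mul_ne_zero hc hc',
      by rw [h_eq, C_mul, mul_assoc]⟩
  · simp only [Finset.forall_mem_image]
    rintro p hp q hq ⟨c, hc, h⟩
    rw [h_inj p hp q hq c hc h]

theorem rank_two_multiples_count (d : ℕ) (hd : 4 ≤ d) (L₁ L₂ L₃ : ℂ × ℂ)
    (h12 : L₁.1 * L₂.2 ≠ L₁.2 * L₂.1) (h23 : L₂.1 * L₃.2 ≠ L₂.2 * L₃.1)
    (h13 : L₁.1 * L₃.2 ≠ L₁.2 * L₃.1) :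
    ∃ S : Finset (MvPolynomial (Fin 2) ℂ),
      S.card = (d - 1).choose 2 ∧
      (∀ G ∈ S, G.IsHomogeneous d ∧ waringRank d G = 2 ∧ lin L₁ * lin L₂ * lin L₃ ∣ G) ∧
      (∀ F : MvPolynomial (Fin 2) ℂ, F.IsHomogeneous d → waringRank d F = 2 →
        lin L₁ * lin L₂ * lin L₃ ∣ F → ∃ G ∈ S, ∃ c : ℂ, c ≠ 0 ∧ F = C c * G) ∧
      (∀ G ∈ S, ∀ G' ∈ S, (∃ c : ℂ, c ≠ 0 ∧ G = C c * G') → G = G') := by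
  have hd' : (d : ℂ) * (d - 1) ≠ 0 :=
    mul_ne_zero (Nat.cast_ne_zero.mpr (by lia)) (sub_ne_zero.mpr (Nat.cast_ne_one.mpr (by lia)))
  obtain ⟨S, h_card, h_mem, h_complete, h_inj⟩ :=
    rank_two_multiples_count_general hd' ![L₁, L₂, L₃]
      (pairwise_wedge_ne_zero (sub_ne_zero.mpr h12) (sub_ne_zero.mpr h23) (sub_ne_zero.mpr h13))
  simp only [Fin.prod_univ_three] at h_mem h_complete
  exact ⟨S, h_card, h_mem, fun F _ ↦ h_complete F, h_inj⟩
end
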